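/- Capacity of perfectly smooth LDCs (Corollary 1): for all integers N ≥ 2 and K ≥ 1, the supremum over all code lengths M ∈ ℕ and over all perfectly smooth locally decodable codes (SLDCs) with locality N and K source symbols of the symbol rate R_s = L_w/L_x equals C*(N,K) = N·(1 + 1/N + 1/N² + ⋯ + 1/N^{K−1})^{−1}, and this supremum is attained by some SLDC. -/

import Mathlib

open scoped BigOperators

noncomputable section

/-- A finite probability space: a finite type together with a probability mass function. -/
structure FinProbSpace where
  Ω : Type
  [fin : Fintype Ω]
  p : Ω → ℝ
  nonneg : ∀ ω, 0 ≤ p ω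
  sum_one : ∑ ω, p ω = 1

attribute [instance] FinProbSpace.fin

namespace FinProbSpace

variable (P : FinProbSpace)

/-- Probability that the random variable `X` takes the value `a`. -/
def prob {α : Type} [DecidableEq α] (X : P.Ω → α) (a : α) : ℝ :=
  ∑ ω, if X ω = a then P.p ω else 0

/-- Shannon entropy (in bits) of a finitely valued random variable. -/
def H {α : Type} [Fintype α] [DecidableEq α] (X : P.Ω → α) : ℝ :=
  ∑ a, -(P.prob X a * Real.logb 2 (P.prob X a))

/-- Conditional Shannon entropy `H(X | Y) = H(X, Y) - H(Y)` (in bits). -/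
def condH {α β : Type} [Fintype α] [DecidableEq α] [Fintype β] [DecidableEq β]
    (X : P.Ω → α) (Y : P.Ω → β) : ℝ :=
  P.H (fun ω => (X ω, Y ω)) - P.H Y

/-- The tuple random variable `(X_i)_{i ∈ ι}`. -/
def tuple {ι V : Type} (X : ι → P.Ω → V) : P.Ω → ι → V := fun ω i => X i ω

/-- Joint (mutual) independence of a finite family of random variables. -/
def iIndep {ι V : Type} [Fintype ι] [DecidableEq ι] [DecidableEq V] (X : ι → P.Ω → V) : Prop :=
  ∀ a : ι → V, P.prob (P.tuple X) a = ∏ i, P.prob (X i) (a i)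

/-- `X` and `Y` contain the same information about everything beyond `Z`:
`H(X | Y, Z) = H(Y | X, Z) = 0`. -/
def sameInfo {α β γ : Type} [Fintype α] [DecidableEq α] [Fintype β] [DecidableEq β]
    [Fintype γ] [DecidableEq γ] (X : P.Ω → α) (Y : P.Ω → β) (Z : P.Ω → γ) : Prop :=
  P.condH X (fun ω => (Y ω, Z ω)) = 0 ∧ P.condH Y (fun ω => (X ω, Z ω)) = 0

end FinProbSpace

/-- A locally decodable code with `K` source symbols of entropy `Lw`, `M` coded symbols of
entropy `Lx`, and locality `N`. -/
structure LDC (K N M : ℕ) (Lw Lx : ℝ) where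
  P : FinProbSpace
  V : Type
  [fV : Fintype V]
  [dV : DecidableEq V]
  V' : Type
  [fV' : Fintype V']
  [dV' : DecidableEq V']
  /-- the source symbols -/
  W : Fin K → P.Ω → V
  /-- the coded symbols -/
  X : Fin M → P.Ω → V'
  indep : P.iIndep W
  HW : ∀ k, P.H (W k) = Lw
  coded_fn : ∀ m, ∃ f : (Fin K → V) → V', ∀ ω, X m ω = f (fun k => W k ω)
  HX : ∀ m, P.H (X m) = Lx
  /-- the decoding supersets -/
  decSets : Fin K → Finset (Finset (Fin M))
  decSets_nonempty : ∀ k, (decSets k).Nonempty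
  decSets_card : ∀ k, ∀ s ∈ decSets k, s.card = N
  decodes : ∀ k, ∀ s ∈ decSets k,
    P.condH (W k) (P.tuple fun i : {x // x ∈ s} => X i.1) = 0

attribute [instance] LDC.fV LDC.dV LDC.fV' LDC.dV'

/-- A universal LDC: every coded symbol appears in some decoding set of every source symbol. -/
def LDC.IsUniversal {K N M : ℕ} {Lw Lx : ℝ} (C : LDC K N M Lw Lx) : Prop :=
  ∀ (m : Fin M) (k : Fin K), ∃ s ∈ C.decSets k, m ∈ s

/-- A perfectly smooth LDC: for each source symbol, every coded symbol lies in the same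
number of decoding sets. -/
def LDC.IsSmooth {K N M : ℕ} {Lw Lx : ℝ} (C : LDC K N M Lw Lx) : Prop :=
  ∀ (k : Fin K) (m m' : Fin M),
    ((C.decSets k).filter (fun s => m ∈ s)).card =
      ((C.decSets k).filter (fun s => m' ∈ s)).card

/-- `C*(N, K) = N (1 + 1/N + ⋯ + 1/N^{K-1})⁻¹`. -/
def Cstar (N K : ℕ) : ℝ := N / (∑ j ∈ Finset.range K, (1 / (N : ℝ)) ^ j)

/-- An `N`-query information retrieval scheme with `K` messages of entropy `Lw` and
answer sets of sizes `Mn n` with answers of entropy `Lx`. -/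
structure IRScheme (K N : ℕ) (Mn : Fin N → ℕ) (Lw Lx : ℝ) where
  P : FinProbSpace
  V : Type
  [fV : Fintype V]
  [dV : DecidableEq V]
  V' : Type
  [fV' : Fintype V']
  [dV' : DecidableEq V']
  /-- the messages -/
  W : Fin K → P.Ω → V
  /-- `A n m` is the `m`-th possible answer of database `n` -/
  A : (n : Fin N) → Fin (Mn n) → P.Ω → V'
  indep : P.iIndep W
  HW : ∀ k, P.H (W k) = Lw
  ans_fn : ∀ n m, ∃ f : (Fin K → V) → V', ∀ ω, A n m ω = f (fun k => W k ω)
  HA : ∀ n m, P.H (A n m) = Lx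
  /-- the decoding supersets: each decoding set consists of one answer index per database -/
  Q : Fin K → Finset ((n : Fin N) → Fin (Mn n))
  Q_nonempty : ∀ k, (Q k).Nonempty
  decodes : ∀ k, ∀ q ∈ Q k, P.condH (W k) (P.tuple fun n => A n (q n)) = 0

attribute [instance] IRScheme.fV IRScheme.dV IRScheme.fV' IRScheme.dV'

/-- A repudiative (RIR_max) scheme: every possible answer of every database appears in some
decoding set of every message. -/
def IRScheme.IsRIR {K N : ℕ} {Mn : Fin N → ℕ} {Lw Lx : ℝ} (C : IRScheme K N Mn Lw Lx) : Prop :=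
  ∀ (n : Fin N) (m : Fin (Mn n)) (k : Fin K), ∃ q ∈ C.Q k, q n = m

/-- A perfectly private (PIR_max) scheme: for each message there is a distribution on its
decoding sets such that the marginal distribution of the query to each database does not
depend on the message. -/
def IRScheme.IsPIR {K N : ℕ} {Mn : Fin N → ℕ} {Lw Lx : ℝ} (C : IRScheme K N Mn Lw Lx) : Prop :=
  ∃ μ : Fin K → ((n : Fin N) → Fin (Mn n)) → ℝ,
    (∀ k q, 0 ≤ μ k q) ∧ (∀ k, ∑ q ∈ C.Q k, μ k q = 1) ∧
    (∀ (k k' : Fin K) (n : Fin N) (m : Fin (Mn n)),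
      ∑ q ∈ (C.Q k).filter (fun q => q n = m), μ k q =
        ∑ q ∈ (C.Q k').filter (fun q => q n = m), μ k' q)

/-- `C_K(N) = (1 + 1/N + ⋯ + 1/N^{K-1})⁻¹`, the capacity of PIR. -/
def CK (N K : ℕ) : ℝ := (∑ j ∈ Finset.range K, (1 / (N : ℝ)) ^ j)⁻¹

/-!
*Upper bound.* Let `W_T` be the family of the sources indexed by `T`. If `j ∉ T` and `s` is a
decoding set of `W_j` containing `m`, then revealing `W_j` splits `H(X_s | W_T)` into `L_w` bits
for `W_j` and at least `H(X_m | W_{T ∪ {j}})` further bits, whereas subadditivity gives some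
`m' ∈ s` with `H(X_s | W_T) ≤ N H(X_{m'} | W_T)`. Smoothness makes such an `s` available for every
`m`, so starting from all sources revealed and removing them one at a time yields
`N L_x ≥ L_w (1 + 1/N + ⋯ + 1/N^{K-1})`.

*Attainment.* The coded symbols are indexed by the points `q` of the grid `(ℤ/N)^K`, and the
decoding sets of `W_k` are the lines in direction `k`, so that every point lies on exactly one of
them. In the Tian–Sun–Chen retrieval code a source is a function on `ℤ/N` vanishing at `0`, and the
symbol at `t` is the sum `∑ k, W_k (t k)`. All of these symbols carry one bit except the one at
`t = 0`, which carries none; running a copy of that code for every translate of the grid makes all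
coded symbols equally large.
-/

namespace FinProbSpace

open Function
open scoped Finset

variable (P : FinProbSpace)

section Probability

variable {α β : Type} [DecidableEq α] [DecidableEq β]

lemma prob_nonneg (X : P.Ω → α) (a : α) : 0 ≤ P.prob X a :=
  Finset.sum_nonneg fun ω _ => by split_ifs <;> simp [P.nonneg]

lemma p_le_prob_apply (X : P.Ω → α) (ω : P.Ω) : P.p ω ≤ P.prob X (X ω) := by
  have h := Finset.single_le_sum (f := fun ω' => if X ω' = X ω then P.p ω' else 0)
    (fun ω' _ => by split_ifs <;> simp [P.nonneg]) (Finset.mem_univ ω)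
  rwa [if_pos rfl] at h

variable {P} in
lemma prob_apply_pos {ω : P.Ω} (hω : 0 < P.p ω) (X : P.Ω → α) : 0 < P.prob X (X ω) :=
  hω.trans_le (P.p_le_prob_apply X ω)

variable {P} in
lemma prob_apply_le_of_factorsThrough {X : P.Ω → α} {Y : P.Ω → β} (h : X.FactorsThrough Y)
    (ω : P.Ω) : P.prob Y (Y ω) ≤ P.prob X (X ω) := by
  refine Finset.sum_le_sum fun ω' _ => ?_
  by_cases hY : Y ω' = Y ω
  · rw [if_pos hY, if_pos (h hY)]
  · rw [if_neg hY]
    split_ifs <;> simp [P.nonneg]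

lemma sum_p_mul_comp [Fintype α] (X : P.Ω → α) (g : α → ℝ) :
    ∑ ω, P.p ω * g (X ω) = ∑ a, P.prob X a * g a := by
  simp only [prob, Finset.sum_mul, ite_mul, zero_mul]
  rw [Finset.sum_comm]
  simp

lemma sum_prob [Fintype α] (X : P.Ω → α) : ∑ a, P.prob X a = 1 := by
  simpa [P.sum_one] using (P.sum_p_mul_comp X fun _ => 1).symm

lemma sum_prob_prodMk [Fintype α] (X : P.Ω → α) (Y : P.Ω → β) (b : β) :
    ∑ a, P.prob (fun ω => (X ω, Y ω)) (a, b) = P.prob Y b := by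
  simp only [prob, Prod.mk.injEq, ite_and]
  rw [Finset.sum_comm]
  simp

end Probability

section Entropy

variable {α β γ : Type} [Fintype α] [DecidableEq α] [Fintype β] [DecidableEq β]
  [Fintype γ] [DecidableEq γ]

lemma H_eq_sum_p (X : P.Ω → α) :
    P.H X = ∑ ω, P.p ω * -Real.logb 2 (P.prob X (X ω)) := by
  rw [P.sum_p_mul_comp X fun a => -Real.logb 2 (P.prob X a)]
  simp only [H, mul_neg]

lemma H_le_of_factorsThrough {X : P.Ω → α} {Y : P.Ω → β} (h : X.FactorsThrough Y) :
    P.H X ≤ P.H Y := by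
  rw [H_eq_sum_p, H_eq_sum_p]
  refine Finset.sum_le_sum fun ω _ => ?_
  rcases (P.nonneg ω).eq_or_lt with h0 | h0
  · simp [← h0]
  · exact mul_le_mul_of_nonneg_left (neg_le_neg (Real.logb_le_logb_of_le one_lt_two
      (prob_apply_pos h0 Y) (prob_apply_le_of_factorsThrough h ω))) h0.le

lemma H_congr {X : P.Ω → α} {Y : P.Ω → β} (h : ∀ ω ω', X ω = X ω' ↔ Y ω = Y ω') :
    P.H X = P.H Y :=
  le_antisymm (P.H_le_of_factorsThrough fun _ _ => (h _ _).2)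
    (P.H_le_of_factorsThrough fun _ _ => (h _ _).1)

lemma H_const (a : α) : P.H (fun _ => a) = 0 := by
  simp [H_eq_sum_p, prob, P.sum_one]

lemma sum_p_mul_div_prob_le (X : P.Ω → α) {q : α → ℝ} (hq : ∀ a, 0 ≤ q a) :
    ∑ ω, P.p ω * (q (X ω) / P.prob X (X ω)) ≤ ∑ a, q a := by
  rw [P.sum_p_mul_comp X fun a => q a / P.prob X a]
  refine Finset.sum_le_sum fun a _ => ?_
  rcases eq_or_ne (P.prob X a) 0 with h | h
  · simpa [h] using hq a
  · exact (mul_div_cancel₀ _ h).le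

lemma H_le_crossEntropy (X : P.Ω → α) {q : α → ℝ} (hq : ∀ a, 0 ≤ q a)
    (hpos : ∀ ω, 0 < P.p ω → 0 < q (X ω)) (hsum : ∑ a, q a ≤ 1) :
    P.H X ≤ ∑ ω, P.p ω * -Real.logb 2 (q (X ω)) := by
  have hterm : ∀ ω, P.p ω * -Real.logb 2 (P.prob X (X ω)) - P.p ω * -Real.logb 2 (q (X ω)) ≤
      (P.p ω * (q (X ω) / P.prob X (X ω)) - P.p ω) / Real.log 2 := by
    intro ω
    rcases (P.nonneg ω).eq_or_lt with h0 | h0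
    · simp [← h0]
    have hX := prob_apply_pos h0 X
    have hlog := Real.log_le_sub_one_of_pos (div_pos (hpos ω h0) hX)
    rw [Real.log_div (hpos ω h0).ne' hX.ne'] at hlog
    calc _ = P.p ω * (Real.log (q (X ω)) - Real.log (P.prob X (X ω))) / Real.log 2 := by
          simp only [Real.logb]
          ring
      _ ≤ P.p ω * (q (X ω) / P.prob X (X ω) - 1) / Real.log 2 := by gcongr
      _ = _ := by ring
  rw [H_eq_sum_p, ← sub_nonpos, ← Finset.sum_sub_distrib]
  refine (Finset.sum_le_sum fun ω _ => hterm ω).trans ?_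
  rw [← Finset.sum_div, Finset.sum_sub_distrib, P.sum_one]
  exact div_nonpos_of_nonpos_of_nonneg
    (sub_nonpos.2 ((P.sum_p_mul_div_prob_le X hq).trans hsum)) (Real.log_nonneg one_le_two)

lemma sum_condIndep_prob (X : P.Ω → α) (Y : P.Ω → β) (Z : P.Ω → γ) :
    ∑ t : α × β × γ, P.prob (fun ω => (X ω, Z ω)) (t.1, t.2.2) *
      P.prob (fun ω => (Y ω, Z ω)) t.2 / P.prob Z t.2.2 = 1 := by
  calc _ = ∑ b, ∑ c, ∑ a, P.prob (fun ω => (X ω, Z ω)) (a, c) *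
        P.prob (fun ω => (Y ω, Z ω)) (b, c) / P.prob Z c := by
        rw [Fintype.sum_prod_type_right, Fintype.sum_prod_type]
    _ = ∑ c, ∑ b, P.prob Z c * P.prob (fun ω => (Y ω, Z ω)) (b, c) / P.prob Z c := by
        rw [Finset.sum_comm]
        simp only [← Finset.sum_div, ← Finset.sum_mul, sum_prob_prodMk]
    _ = ∑ c, P.prob Z c := by
        simp only [← Finset.sum_div, ← Finset.mul_sum, sum_prob_prodMk, mul_self_div_self]
    _ = 1 := P.sum_prob Z

lemma condH_prodMk_right_le (X : P.Ω → α) (Y : P.Ω → β) (Z : P.Ω → γ) :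
    P.condH X (fun ω => (Y ω, Z ω)) ≤ P.condH X Z := by
  -- Gibbs' inequality against the law on `α × β × γ` under which `X` and `Y` are independent
  -- given `Z`, with the pairs `(X, Z)` and `(Y, Z)` keeping their laws.
  have hpos : ∀ ω, 0 < P.p ω → 0 < P.prob (fun ω => (X ω, Z ω)) (X ω, Z ω) *
      P.prob (fun ω => (Y ω, Z ω)) (Y ω, Z ω) / P.prob Z (Z ω) := fun ω h =>
    div_pos (mul_pos (prob_apply_pos h fun ω => (X ω, Z ω))
      (prob_apply_pos h fun ω => (Y ω, Z ω))) (prob_apply_pos h Z)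
  have hgibbs := P.H_le_crossEntropy (fun ω => (X ω, Y ω, Z ω))
    (fun t => div_nonneg (mul_nonneg (P.prob_nonneg _ _) (P.prob_nonneg _ _)) (P.prob_nonneg _ _))
    hpos (P.sum_condIndep_prob X Y Z).le
  have hcross : ∑ ω, P.p ω * -Real.logb 2 (P.prob (fun ω => (X ω, Z ω)) (X ω, Z ω) *
      P.prob (fun ω => (Y ω, Z ω)) (Y ω, Z ω) / P.prob Z (Z ω)) =
      P.H (fun ω => (X ω, Z ω)) + P.H (fun ω => (Y ω, Z ω)) - P.H Z := by
    simp only [H_eq_sum_p, ← Finset.sum_add_distrib, ← Finset.sum_sub_distrib]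
    refine Finset.sum_congr rfl fun ω _ => ?_
    rcases (P.nonneg ω).eq_or_lt with h0 | h0
    · simp [← h0]
    have hXZ := (prob_apply_pos h0 fun ω => (X ω, Z ω)).ne'
    have hYZ := (prob_apply_pos h0 fun ω => (Y ω, Z ω)).ne'
    rw [Real.logb_div (mul_ne_zero hXZ hYZ) (prob_apply_pos h0 Z).ne', Real.logb_mul hXZ hYZ]
    ring
  unfold condH
  linarith

lemma condH_prodMk_left (X : P.Ω → α) (Y : P.Ω → β) (Z : P.Ω → γ) :
    P.condH (fun ω => (X ω, Y ω)) Z = P.condH Y Z + P.condH X (fun ω => (Y ω, Z ω)) := by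
  have h : P.H (fun ω => ((X ω, Y ω), Z ω)) = P.H (fun ω => (X ω, Y ω, Z ω)) :=
    P.H_congr fun ω ω' => by simp only [Prod.mk.injEq, and_assoc]
  unfold condH
  linarith

lemma condH_nonneg (X : P.Ω → α) (Y : P.Ω → β) : 0 ≤ P.condH X Y :=
  sub_nonneg.2 (P.H_le_of_factorsThrough fun _ _ h => (Prod.mk.inj h).2)

lemma condH_eq_zero_of_factorsThrough {X : P.Ω → α} {Y : P.Ω → β} (h : X.FactorsThrough Y) :
    P.condH X Y = 0 :=
  sub_eq_zero.2 (P.H_congr fun ω ω' => by simpa using @h ω ω')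

lemma condH_le_of_factorsThrough {X : P.Ω → α} {Y : P.Ω → β} (h : X.FactorsThrough Y)
    (Z : P.Ω → γ) : P.condH X Z ≤ P.condH Y Z :=
  sub_le_sub_right (P.H_le_of_factorsThrough fun _ _ hYZ =>
    Prod.ext (h (Prod.mk.inj hYZ).1) (Prod.mk.inj hYZ).2) _

lemma condH_congr_right (X : P.Ω → α) {Y : P.Ω → β} {Z : P.Ω → γ}
    (h : ∀ ω ω', Y ω = Y ω' ↔ Z ω = Z ω') : P.condH X Y = P.condH X Z := by
  rw [condH, condH, P.H_congr h]
  exact congrArg (· - P.H Z) (P.H_congr fun ω ω' => by simp only [Prod.mk.injEq, h])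

lemma condH_const (X : P.Ω → α) (b : β) : P.condH X (fun _ => b) = P.H X := by
  rw [condH, H_const, sub_zero]
  exact P.H_congr fun _ _ => by simp only [Prod.mk.injEq, and_true]

lemma condH_le_H (X : P.Ω → α) (Y : P.Ω → β) : P.condH X Y ≤ P.H X :=
  calc P.condH X Y = P.condH X (fun ω => (Y ω, ())) :=
        P.condH_congr_right X fun _ _ => by simp only [Prod.mk.injEq, and_true]
    _ ≤ P.condH X (fun _ => ()) := P.condH_prodMk_right_le X Y _
    _ = P.H X := P.condH_const X ()

lemma H_prodMk_le (X : P.Ω → α) (Y : P.Ω → β) :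
    P.H (fun ω => (X ω, Y ω)) ≤ P.H X + P.H Y :=
  sub_le_iff_le_add.1 (P.condH_le_H X Y)

lemma condH_add_condH_le_of_condH_eq_zero {X : P.Ω → α} {Y : P.Ω → β} (h : P.condH X Y = 0)
    (Z : P.Ω → γ) : P.condH X Z + P.condH Y (fun ω => (X ω, Z ω)) ≤ P.condH Y Z := by
  have hX : P.condH X (fun ω => (Y ω, Z ω)) ≤ 0 :=
    calc P.condH X (fun ω => (Y ω, Z ω)) = P.condH X (fun ω => (Z ω, Y ω)) :=
          P.condH_congr_right X fun _ _ => by simp only [Prod.mk.injEq, and_comm]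
      _ ≤ P.condH X Y := P.condH_prodMk_right_le X Z Y
      _ = 0 := h
  calc P.condH X Z + P.condH Y (fun ω => (X ω, Z ω)) = P.condH (fun ω => (Y ω, X ω)) Z :=
        (P.condH_prodMk_left Y X Z).symm
    _ ≤ P.condH (fun ω => (X ω, Y ω)) Z :=
        P.condH_le_of_factorsThrough (fun _ _ h => Prod.ext (Prod.mk.inj h).2 (Prod.mk.inj h).1) Z
    _ = P.condH Y Z + P.condH X (fun ω => (Y ω, Z ω)) := P.condH_prodMk_left X Y Z
    _ ≤ P.condH Y Z := add_le_of_nonpos_right hX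

end Entropy

section Subtuple

variable {ι V γ : Type}

/-- The subfamily of `X` indexed by `S`, viewed as one random variable. -/
abbrev subtuple (X : ι → P.Ω → V) (S : Finset ι) : P.Ω → {i // i ∈ S} → V :=
  P.tuple fun i : {i // i ∈ S} => X i.1

lemma subtuple_eq_iff (X : ι → P.Ω → V) (S : Finset ι) (ω ω' : P.Ω) :
    P.subtuple X S ω = P.subtuple X S ω' ↔ ∀ i ∈ S, X i ω = X i ω' := by
  simp [tuple, funext_iff]

variable [DecidableEq ι] [Fintype V] [DecidableEq V] [Fintype γ] [DecidableEq γ]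

lemma condH_subtuple_le (X : ι → P.Ω → V) (S : Finset ι) (Z : P.Ω → γ) :
    P.condH (P.subtuple X S) Z ≤ ∑ i ∈ S, P.condH (X i) Z := by
  induction S using Finset.induction_on with
  | empty =>
    exact (P.condH_eq_zero_of_factorsThrough fun _ _ _ => by simp [subtuple_eq_iff]).le
  | insert a S ha ih =>
    have hsplit : (P.subtuple X (insert a S)).FactorsThrough
        (fun ω => (X a ω, P.subtuple X S ω)) := fun ω ω' h => by
      simpa [subtuple_eq_iff] using h
    rw [Finset.sum_insert ha]
    calc P.condH (P.subtuple X (insert a S)) Z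
        ≤ P.condH (fun ω => (X a ω, P.subtuple X S ω)) Z :=
          P.condH_le_of_factorsThrough hsplit Z
      _ = P.condH (P.subtuple X S) Z + P.condH (X a) (fun ω => (P.subtuple X S ω, Z ω)) :=
          P.condH_prodMk_left _ _ _
      _ ≤ ∑ i ∈ S, P.condH (X i) Z + P.condH (X a) Z :=
          add_le_add ih (P.condH_prodMk_right_le _ _ _)
      _ = _ := add_comm _ _

lemma H_subtuple_le (X : ι → P.Ω → V) (S : Finset ι) :
    P.H (P.subtuple X S) ≤ ∑ i ∈ S, P.H (X i) := by
  simpa only [condH_const] using P.condH_subtuple_le X S fun _ => ()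

variable {P} [Fintype ι] {X : ι → P.Ω → V}

lemma iIndep.H_tuple (hX : P.iIndep X) : P.H (P.tuple X) = ∑ i, P.H (X i) := by
  simp only [H_eq_sum_p]
  rw [Finset.sum_comm]
  refine Finset.sum_congr rfl fun ω _ => ?_
  rcases (P.nonneg ω).eq_or_lt with h0 | h0
  · simp [← h0]
  rw [hX, ← Finset.mul_sum, Finset.sum_neg_distrib,
    ← Real.logb_prod (hf := fun i _ => (prob_apply_pos h0 (X i)).ne')]
  rfl

lemma iIndep.H_subtuple (hX : P.iIndep X) (S : Finset ι) :
    P.H (P.subtuple X S) = ∑ i ∈ S, P.H (X i) := by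
  refine le_antisymm (P.H_subtuple_le X S) (le_of_add_le_add_right (a := ∑ i ∈ Sᶜ, P.H (X i)) ?_)
  have hsplit : (P.tuple X).FactorsThrough
      (fun ω => (P.subtuple X S ω, P.subtuple X Sᶜ ω)) := by
    intro ω ω' h
    simp only [Prod.mk.injEq, subtuple_eq_iff, Finset.mem_compl] at h
    exact funext fun i => (em (i ∈ S)).elim (h.1 i) (h.2 i)
  calc _ = P.H (P.tuple X) := by rw [Finset.sum_add_sum_compl, hX.H_tuple]
    _ ≤ P.H (fun ω => (P.subtuple X S ω, P.subtuple X Sᶜ ω)) := P.H_le_of_factorsThrough hsplit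
    _ ≤ P.H (P.subtuple X S) + P.H (P.subtuple X Sᶜ) := P.H_prodMk_le _ _
    _ ≤ P.H (P.subtuple X S) + ∑ i ∈ Sᶜ, P.H (X i) := by gcongr; exact P.H_subtuple_le X Sᶜ

lemma iIndep.condH_subtuple_of_notMem (hX : P.iIndep X) {S : Finset ι} {j : ι} (hj : j ∉ S) :
    P.condH (X j) (P.subtuple X S) = P.H (X j) := by
  have h : P.H (fun ω => (X j ω, P.subtuple X S ω)) = P.H (P.subtuple X (insert j S)) :=
    P.H_congr fun ω ω' => by simp [subtuple_eq_iff]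
  rw [condH, h, hX.H_subtuple, hX.H_subtuple, Finset.sum_insert hj, add_sub_cancel_right]

end Subtuple

section Uniform

/-- The uniform distribution on a finite nonempty type. -/
abbrev uniform (A : Type) [Fintype A] [Nonempty A] : FinProbSpace where
  Ω := A
  p _ := (Fintype.card A : ℝ)⁻¹
  nonneg _ := by positivity
  sum_one := by simp

lemma prob_uniform {A α : Type} [Fintype A] [Nonempty A] [DecidableEq α] (X : A → α) (a : α) :
    (uniform A).prob X a = #{x | X x = a} / Fintype.card A := by
  simp [prob, Finset.sum_ite, div_eq_mul_inv]

variable {α : Type} [Fintype α] [DecidableEq α]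

/-- The random variable `X` takes all values of `α` with equal probability. -/
def IsUniform (X : P.Ω → α) : Prop :=
  ∀ a, P.prob X a = (Fintype.card α : ℝ)⁻¹

variable {P}

lemma IsUniform.H_eq {X : P.Ω → α} (hX : P.IsUniform X) :
    P.H X = Real.logb 2 (Fintype.card α) := by
  have hterm : ∀ ω, -Real.logb 2 (P.prob X (X ω)) = Real.logb 2 (Fintype.card α) := fun ω => by
    rw [hX, Real.logb_inv, neg_neg]
  simp only [H_eq_sum_p, hterm, ← Finset.sum_mul, P.sum_one, one_mul]

lemma isUniform_of_prob_eq {X : P.Ω → α} (h : ∀ a b, P.prob X a = P.prob X b) :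
    P.IsUniform X := by
  intro a
  have hsum := P.sum_prob X
  rw [Finset.sum_congr rfl fun b _ => h b a, Finset.sum_const, nsmul_eq_mul] at hsum
  exact eq_inv_of_mul_eq_one_right hsum

lemma iIndep_of_isUniform_tuple {ι : Type} [Fintype ι] [DecidableEq ι] {X : ι → P.Ω → α}
    (hX : P.IsUniform (P.tuple X)) (hXi : ∀ i, P.IsUniform (X i)) : P.iIndep X := by
  intro a
  simp only [hX a, fun i => hXi i (a i), Finset.prod_const, Fintype.card_fun, Finset.card_univ,
    Nat.cast_pow, inv_pow]

lemma isUniform_hom {A B : Type} [AddGroup A] [Fintype A] [AddGroup B] [Fintype B]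
    [DecidableEq B] {f : A →+ B} (hf : Surjective f) : (uniform A).IsUniform f :=
  isUniform_of_prob_eq fun a b => by
    rw [prob_uniform, prob_uniform, AddMonoidHom.card_fiber_eq_of_mem_range f (hf a) (hf b)]

variable {ι G : Type} [Fintype ι] [DecidableEq ι] [AddGroup G] [Fintype G] [DecidableEq G]

lemma isUniform_eval (i : ι) : (uniform (ι → G)).IsUniform fun w => w i :=
  isUniform_hom (f := Pi.evalAddMonoidHom (fun _ : ι => G) i) (surjective_eval i)

lemma iIndep_eval : (uniform (ι → G)).iIndep fun i w => w i :=
  iIndep_of_isUniform_tuple (isUniform_hom (f := AddMonoidHom.id (ι → G)) surjective_id)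
    isUniform_eval

end Uniform

end FinProbSpace

namespace LDC

open FinProbSpace

variable {K N M : ℕ} {Lw Lx : ℝ} {C : LDC K N M Lw Lx}

lemma nonempty_of_mem_decSets (hN : 1 ≤ N) {k : Fin K} {s : Finset (Fin M)}
    (hs : s ∈ C.decSets k) : s.Nonempty :=
  Finset.card_pos.1 (hN.trans_eq (C.decSets_card k s hs).symm)

lemma IsSmooth.isUniversal (hC : C.IsSmooth) (hN : 1 ≤ N) : C.IsUniversal := by
  intro m k
  obtain ⟨s, hs⟩ := C.decSets_nonempty k
  obtain ⟨m', hm'⟩ := nonempty_of_mem_decSets hN hs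
  have hpos : 0 < ((C.decSets k).filter (fun s => m ∈ s)).card := by
    rw [hC k m m']
    exact Finset.card_pos.2 ⟨s, Finset.mem_filter.2 ⟨hs, hm'⟩⟩
  obtain ⟨t, ht⟩ := Finset.card_pos.1 hpos
  exact ⟨t, Finset.mem_filter.1 ht⟩

lemma add_condH_le_condH_subtuple {T : Finset (Fin K)} {j : Fin K} (hj : j ∉ T)
    {s : Finset (Fin M)} (hs : s ∈ C.decSets j) {m : Fin M} (hm : m ∈ s) :
    Lw + C.P.condH (C.X m) (C.P.subtuple C.W (insert j T)) ≤
      C.P.condH (C.P.subtuple C.X s) (C.P.subtuple C.W T) :=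
  calc _ = C.P.condH (C.W j) (C.P.subtuple C.W T) +
        C.P.condH (C.X m) (fun ω => (C.W j ω, C.P.subtuple C.W T ω)) := by
        rw [C.indep.condH_subtuple_of_notMem hj, C.HW]
        exact congrArg _ (C.P.condH_congr_right _ fun _ _ => by simp [subtuple_eq_iff])
    _ ≤ C.P.condH (C.W j) (C.P.subtuple C.W T) +
        C.P.condH (C.P.subtuple C.X s) (fun ω => (C.W j ω, C.P.subtuple C.W T ω)) := by
        gcongr
        exact C.P.condH_le_of_factorsThrough
          (fun ω ω' h => (C.P.subtuple_eq_iff C.X s ω ω').1 h m hm) _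
    _ ≤ _ := C.P.condH_add_condH_le_of_condH_eq_zero (C.decodes j s hs) _

lemma IsUniversal.exists_add_condH_le (hC : C.IsUniversal) {T : Finset (Fin K)} {j : Fin K}
    (hj : j ∉ T) (m : Fin M) :
    ∃ m', Lw + C.P.condH (C.X m) (C.P.subtuple C.W (insert j T)) ≤
      N * C.P.condH (C.X m') (C.P.subtuple C.W T) := by
  obtain ⟨s, hs, hms⟩ := hC m j
  obtain ⟨m', -, hmax⟩ := s.exists_max_image
    (fun i => C.P.condH (C.X i) (C.P.subtuple C.W T)) ⟨m, hms⟩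
  refine ⟨m', ?_⟩
  calc _ ≤ C.P.condH (C.P.subtuple C.X s) (C.P.subtuple C.W T) :=
        add_condH_le_condH_subtuple hj hs hms
    _ ≤ ∑ i ∈ s, C.P.condH (C.X i) (C.P.subtuple C.W T) := C.P.condH_subtuple_le _ _ _
    _ ≤ s.card • C.P.condH (C.X m') (C.P.subtuple C.W T) := Finset.sum_le_card_nsmul _ _ _ hmax
    _ = _ := by rw [C.decSets_card j s hs, nsmul_eq_mul]

lemma IsUniversal.exists_mul_geom_sum_le [Nonempty (Fin M)] (hC : C.IsUniversal) (hN : 1 ≤ N)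
    (U : Finset (Fin K)) :
    ∃ m, Lw * ∑ i ∈ Finset.range U.card, (1 / (N : ℝ)) ^ i ≤
      N * C.P.condH (C.X m) (C.P.subtuple C.W Uᶜ) := by
  have hN0 : (0 : ℝ) < N := by exact_mod_cast hN
  induction U using Finset.induction_on with
  | empty =>
    exact ⟨Classical.arbitrary _, by simpa using mul_nonneg hN0.le (C.P.condH_nonneg _ _)⟩
  | insert j U hj ih =>
    obtain ⟨m, hm⟩ := ih
    obtain ⟨m', hm'⟩ := hC.exists_add_condH_le (T := (insert j U)ᶜ) (j := j) (by simp) m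
    have hcompl : insert j (insert j U)ᶜ = Uᶜ := by
      rw [Finset.compl_insert, Finset.insert_erase (Finset.mem_compl.2 hj)]
    rw [hcompl] at hm'
    refine ⟨m', le_trans ?_ hm'⟩
    calc _ = Lw + (Lw * ∑ i ∈ Finset.range U.card, (1 / (N : ℝ)) ^ i) / N := by
          rw [Finset.card_insert_of_notMem hj, geom_sum_succ]
          ring
      _ ≤ _ := by
          gcongr
          exact (div_le_iff₀' hN0).2 hm

lemma IsUniversal.rate_le (hC : C.IsUniversal) (hK : 1 ≤ K) (hN : 1 ≤ N) (hx : 0 < Lx) :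
    Lw / Lx ≤ Cstar N K := by
  obtain ⟨s, hs⟩ := C.decSets_nonempty ⟨0, hK⟩
  have : Nonempty (Fin M) := (nonempty_of_mem_decSets hN hs).to_type
  obtain ⟨m, hm⟩ := hC.exists_mul_geom_sum_le hN Finset.univ
  have hsum : 0 < ∑ i ∈ Finset.range K, (1 / (N : ℝ)) ^ i :=
    Finset.sum_pos (fun i _ => by positivity) ⟨0, Finset.mem_range.2 hK⟩
  rw [Cstar, div_le_div_iff₀ hx hsum]
  calc _ ≤ N * C.P.condH (C.X m) (C.P.subtuple C.W Finset.univᶜ) := by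
        rwa [Finset.card_fin] at hm
    _ ≤ N * C.P.H (C.X m) := by gcongr; exact C.P.condH_le_H _ _
    _ = N * Lx := by rw [C.HX]

end LDC

namespace LineCode

open FinProbSpace Function

/-- The points of the grid `(ℤ/N)^K`, which index the coded symbols. -/
abbrev Point (K N : ℕ) : Type := Fin K → ZMod N

section Lines

variable {K N : ℕ} [NeZero N]

/-- The line through `q` in direction `k`. -/
def line (k : Fin K) (q : Point K N) : Finset (Point K N) :=
  Finset.univ.image fun x => update q k x

variable (N) in
/-- The set of all lines of the grid in direction `k`. -/
def lines (k : Fin K) : Finset (Finset (Point K N)) :=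
  Finset.univ.image (line k)

lemma mem_line {k : Fin K} {p q : Point K N} : p ∈ line k q ↔ ∃ x, update q k x = p := by
  simp [line]

lemma card_line (k : Fin K) (q : Point K N) : (line k q).card = N := by
  rw [line, Finset.card_image_of_injective _ (update_injective q k), Finset.card_univ, ZMod.card]

lemma self_mem_line (k : Fin K) (q : Point K N) : q ∈ line k q :=
  mem_line.2 ⟨q k, update_eq_self k q⟩

lemma line_eq_of_mem {k : Fin K} {p q : Point K N} (h : p ∈ line k q) : line k q = line k p := by
  obtain ⟨x, rfl⟩ := mem_line.1 h
  simp [line]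

lemma filter_mem_lines (k : Fin K) (q : Point K N) :
    (lines N k).filter (fun l => q ∈ l) = {line k q} := by
  ext l
  simp only [lines, Finset.mem_filter, Finset.mem_image, Finset.mem_univ, true_and,
    Finset.mem_singleton]
  constructor
  · rintro ⟨⟨p, rfl⟩, hq⟩
    exact line_eq_of_mem hq
  · rintro rfl
    exact ⟨⟨q, rfl⟩, self_mem_line k q⟩

end Lines

section Symbols

variable {K N : ℕ}

/-- A source symbol: for each translate `s` of the grid, a function `ℤ/N → ℤ/2` vanishing at `0`,
encoded by its values at the nonzero positions. -/
abbrev Message (K N : ℕ) : Type := Point K N → {x : ZMod N // x ≠ 0} → ZMod 2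

/-- The bit of a message at the translate `s` and the possibly zero position `x`. -/
def bit (s : Point K N) (x : ZMod N) : Message K N →+ ZMod 2 where
  toFun v := if h : x = 0 then 0 else v s ⟨x, h⟩
  map_zero' := by simp
  map_add' v w := by split_ifs <;> simp

@[simp]
lemma bit_zero_right (s : Point K N) (v : Message K N) : bit s 0 v = 0 :=
  dif_pos rfl

lemma bit_of_ne_zero (s : Point K N) {x : ZMod N} (hx : x ≠ 0) (v : Message K N) :
    bit s x v = v s ⟨x, hx⟩ :=
  dif_neg hx

/-- The bit at `t` of the coded symbol at `q`; it is computed in the translate `t - q`. -/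
def component (q t : Point K N) : (Fin K → Message K N) →+ ZMod 2 :=
  ∑ k, (bit (t - q) (t k)).comp (Pi.evalAddMonoidHom _ k)

lemma component_apply (q t : Point K N) (w : Fin K → Message K N) :
    component q t w = ∑ k, bit (t - q) (t k) (w k) := by
  simp [component]

lemma component_zero_right (q : Point K N) (w : Fin K → Message K N) : component q 0 w = 0 := by
  simp [component_apply]

/-- The coded symbol at the point `q`. The bit at `t = 0`, which always vanishes, is left out. -/
def symbol (q : Point K N) : (Fin K → Message K N) →+ ({t : Point K N // t ≠ 0} → ZMod 2) :=
  AddMonoidHom.mk' (fun w t => component q t w) fun v w => funext fun _ => map_add _ v w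

lemma component_eq_of_symbol_eq {q : Point K N} {v w : Fin K → Message K N}
    (h : symbol q v = symbol q w) (t : Point K N) : component q t v = component q t w := by
  rcases eq_or_ne t 0 with rfl | ht
  · rw [component_zero_right, component_zero_right]
  · exact congrFun h ⟨t, ht⟩

lemma symbol_surjective (q : Point K N) : Surjective (symbol q) := by
  -- The bit at `t` is produced by a single message `i t` among those that contribute to it.
  intro f
  choose i hi using fun t : {t : Point K N // t ≠ 0} => Function.ne_iff.1 t.2
  obtain ⟨w, hw⟩ : ∃ w : Fin K → Message K N, ∀ k (t : {t : Point K N // t ≠ 0}) x,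
      w k (t - q) x = if i t = k then f t else 0 :=
    ⟨fun k s _ => if h : s + q ≠ 0 then if i ⟨s + q, h⟩ = k then f ⟨s + q, h⟩ else 0 else 0,
      fun k t x => by simp [t.2]⟩
  refine ⟨w, funext fun t => ?_⟩
  calc symbol q w t = ∑ k, bit (t.1 - q) (t.1 k) (w k) := component_apply q t w
    _ = bit (t.1 - q) (t.1 (i t)) (w (i t)) := by
        refine Finset.sum_eq_single _ (fun k _ hk => ?_) (by simp)
        rcases eq_or_ne (t.1 k) 0 with h0 | h0
        · rw [h0, bit_zero_right]
        · rw [bit_of_ne_zero _ h0, hw, if_neg hk.symm]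
    _ = f t := by rw [bit_of_ne_zero _ (hi t), hw, if_pos rfl]

lemma component_update_sub (q s : Point K N) (k : Fin K) (x : ZMod N)
    (w : Fin K → Message K N) :
    component (update q k (x - s k)) (update q k (x - s k) + s) w -
      component (update q k (-s k)) (update q k (-s k) + s) w = bit s x (w k) := by
  simp only [component_apply, add_sub_cancel_left]
  rw [← Finset.sum_sub_distrib, Finset.sum_eq_single k]
  · simp
  · intro j _ hj
    simp [hj]
  · simp

lemma message_eq_of_symbol_eq [NeZero N] {q : Point K N} {k : Fin K}
    {v w : Fin K → Message K N} (h : ∀ p ∈ line k q, symbol p v = symbol p w) : v k = w k := by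
  have hline : ∀ x t, component (update q k x) t v = component (update q k x) t w := fun x t =>
    component_eq_of_symbol_eq (h _ (mem_line.2 ⟨x, rfl⟩)) t
  have hbit : ∀ s x, bit s x (v k) = bit s x (w k) := fun s x => by
    rw [← component_update_sub q, ← component_update_sub q, hline, hline]
  ext s x
  simpa only [bit_of_ne_zero s x.2] using hbit s x

end Symbols

section Code

variable {K N : ℕ} [NeZero N]

lemma H_eval (k : Fin K) :
    (uniform (Fin K → Message K N)).H (fun w => w k) = (N : ℝ) ^ K * (N - 1) := by
  have hN : 1 ≤ N := NeZero.one_le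
  rw [(isUniform_eval k).H_eq, Fintype.card_fun, Fintype.card_fun, Fintype.card_subtype_compl]
  simp [Real.logb_pow, hN]

lemma H_symbol (q : Point K N) :
    (uniform (Fin K → Message K N)).H (symbol q) = (N : ℝ) ^ K - 1 := by
  have hN : 1 ≤ N ^ K := NeZero.one_le
  rw [(isUniform_hom (symbol_surjective q)).H_eq, Fintype.card_fun, Fintype.card_subtype_compl]
  simp [Real.logb_pow, hN]

variable (K N)

/-- The code whose coded symbols are the points of the grid `(ℤ/N)^K`, enumerated by
`Fintype.equivFin`, and whose decoding sets for the `k`-th source symbol are the lines in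
direction `k`. -/
def code :
    LDC K N (Fintype.card (Point K N)) ((N : ℝ) ^ K * (N - 1)) ((N : ℝ) ^ K - 1) where
  P := uniform (Fin K → Message K N)
  V := Message K N
  V' := {t : Point K N // t ≠ 0} → ZMod 2
  W k w := w k
  X m := symbol ((Fintype.equivFin (Point K N)).symm m)
  indep := iIndep_eval
  HW := H_eval
  coded_fn m := ⟨symbol ((Fintype.equivFin (Point K N)).symm m), fun _ => rfl⟩
  HX _ := H_symbol _
  decSets k := (lines N k).map (Finset.mapEmbedding (Fintype.equivFin _).toEmbedding).toEmbedding
  decSets_nonempty k := (Finset.univ_nonempty.image _).map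
  decSets_card k := by
    simp [lines, card_line]
  decodes k := by
    simp only [lines, Finset.forall_mem_map, Finset.forall_mem_image]
    intro q _
    refine condH_eq_zero_of_factorsThrough _ fun v w h =>
      message_eq_of_symbol_eq (q := q) fun p hp => ?_
    have hsymbol := congrFun h ⟨_, Finset.mem_map_of_mem _ hp⟩
    simpa [tuple] using hsymbol

lemma code_isSmooth : (code K N).IsSmooth := by
  have hcard : ∀ k m, (((code K N).decSets k).filter (fun s => m ∈ s)).card = 1 := fun k m => by
    simp [code, Finset.filter_map, comp_def, Finset.mem_map_equiv, filter_mem_lines]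
  intro k m m'
  rw [hcard, hcard]

end Code

end LineCode

lemma Cstar_eq {N : ℕ} (K : ℕ) (hN : 2 ≤ N) :
    Cstar N K = (N : ℝ) ^ K * (N - 1) / ((N : ℝ) ^ K - 1) := by
  have hN1 : (0 : ℝ) < N - 1 := sub_pos.2 (by exact_mod_cast hN)
  have hN0 : (N : ℝ) ≠ 0 := by positivity
  have hsum : ∑ j ∈ Finset.range K, (1 / (N : ℝ)) ^ j =
      N * ((N : ℝ) ^ K - 1) / ((N : ℝ) ^ K * (N - 1)) := by
    have h := geom_sum_mul_neg (1 / (N : ℝ)) K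
    rw [one_div_pow] at h
    rw [eq_div_iff (by positivity)]
    field_simp at h ⊢
    linarith
  rw [Cstar, hsum, div_div_eq_mul_div, mul_div_mul_left _ _ hN0]

/-- Capacity of perfectly smooth LDCs, Corollary 1: for `N ≥ 2`, `K ≥ 1`,
the supremum over all code lengths `M` and all SLDCs of the symbol rate `Lw / Lx` equals
`C*(N, K)`, and it is attained. -/
theorem sldc_capacity (K N : ℕ) (hK : 1 ≤ K) (hN : 2 ≤ N) :
    IsGreatest {r : ℝ | ∃ (M : ℕ) (Lw Lx : ℝ), 0 < Lw ∧ 0 < Lx ∧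
      ∃ C : LDC K N M Lw Lx, C.IsSmooth ∧ r = Lw / Lx} (Cstar N K) := by
  constructor
  · have hN1 : (1 : ℝ) < N := by exact_mod_cast hN
    have : NeZero N := ⟨by omega⟩
    have hLw : 0 < (N : ℝ) ^ K * (N - 1) := mul_pos (by positivity) (sub_pos.2 hN1)
    have hLx : 0 < (N : ℝ) ^ K - 1 := sub_pos.2 (one_lt_pow₀ hN1 (by omega))
    exact ⟨_, _, _, hLw, hLx, LineCode.code K N, LineCode.code_isSmooth K N, Cstar_eq K hN⟩
  · rintro r ⟨M, Lw, Lx, -, hLx, C, hC, rfl⟩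
    exact (hC.isUniversal (by omega)).rate_le hK (by omega) hLx
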